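/- Let G = ([n], E) be a Dyck graph realized as the incomparability graph of the poset P_D (where i ≺_{P_D} j iff i < j and {i,j} ∉ E). Let π ∈ S_n, let o be the acyclic orientation of G induced by π (each edge {π(i),π(j)} with i<j directed from π(j) to π(i)), and let ω_o be the labeling produced by the greedy peeling algorithm. Then for every i ∈ [n−1]: π(i) ≻_{P_D} π(i+1) if and only if ω_o(π(i)) < ω_o(π(i+1)). -/

import Mathlib

open Finset MvPolynomial
open scoped Classical

/-- One peeling step of the greedy labeling algorithm: the set of vertices remaining after
`k` steps; at each step the largest vertex of indegree `0` (with respect to the acyclic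
orientation induced by `π`, which directs each edge from its later-appearing endpoint to
its earlier-appearing endpoint) is removed. -/
noncomputable def remaining {n : ℕ} (G : SimpleGraph (Fin n)) (π : Equiv.Perm (Fin n)) :
    ℕ → Finset (Fin n)
  | 0 => Finset.univ
  | k + 1 =>
    let S := remaining G π k
    match (S.filter fun v => ∀ u ∈ S, ¬ (G.Adj u v ∧ π.symm v < π.symm u)).max with
    | some v => S.erase v
    | none => S

/-- The label `ω_o(v)` produced by the greedy peeling algorithm: the step at which `v` is
removed. -/
noncomputable def omegaO {n : ℕ} (G : SimpleGraph (Fin n)) (π : Equiv.Perm (Fin n))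
    (v : Fin n) : ℕ :=
  sInf {k : ℕ | v ∉ remaining G π k}

/-- `v` is the largest source of the induced orientation on `S`. -/
def IsMaxSource {n : ℕ} (G : SimpleGraph (Fin n)) (π : Equiv.Perm (Fin n))
    (S : Finset (Fin n)) (v : Fin n) : Prop :=
  (v ∈ S ∧ ∀ u ∈ S, ¬ (G.Adj u v ∧ π.symm v < π.symm u)) ∧
  ∀ w ∈ S, (∀ u ∈ S, ¬ (G.Adj u w ∧ π.symm w < π.symm u)) → w ≤ v

lemma remaining_step {n : ℕ} (G : SimpleGraph (Fin n)) (π : Equiv.Perm (Fin n)) (k : ℕ)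
    (hne : (remaining G π k).Nonempty) :
    ∃ v, IsMaxSource G π (remaining G π k) v ∧
      remaining G π (k + 1) = (remaining G π k).erase v := by
  obtain ⟨m, hm, hmax⟩ := Finset.exists_max_image (remaining G π k) (fun v => π.symm v) hne
  have hF : ((remaining G π k).filter fun v => ∀ u ∈ remaining G π k,
      ¬ (G.Adj u v ∧ π.symm v < π.symm u)).Nonempty :=
    ⟨m, Finset.mem_filter.2 ⟨hm, fun u hu h => absurd h.2 (not_lt.2 (hmax u hu))⟩⟩
  obtain ⟨v, hv⟩ := Finset.max_of_nonempty hF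
  refine ⟨v, ⟨?_, ?_⟩, ?_⟩
  · exact Finset.mem_filter.1 (Finset.mem_of_max hv)
  · intro w hw h
    exact Finset.le_max_of_eq (Finset.mem_filter.2 ⟨hw, h⟩) hv
  · rw [remaining]
    simp only [hv]

lemma remaining_empty_step {n : ℕ} (G : SimpleGraph (Fin n)) (π : Equiv.Perm (Fin n)) (k : ℕ)
    (h : remaining G π k = ∅) : remaining G π (k + 1) = ∅ := by
  rw [remaining]
  simp only [h, Finset.filter_empty, Finset.max_empty]

lemma remaining_card {n : ℕ} (G : SimpleGraph (Fin n)) (π : Equiv.Perm (Fin n)) (k : ℕ) :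
    (remaining G π k).card ≤ n - k := by
  induction k with
  | zero => simp [remaining]
  | succ k ih =>
    rcases (remaining G π k).eq_empty_or_nonempty with h | h
    · rw [remaining_empty_step G π k h]; simp
    · obtain ⟨v, hv, he⟩ := remaining_step G π k h
      rw [he, Finset.card_erase_of_mem hv.1.1]
      omega

lemma omegaO_lt {n : ℕ} (G : SimpleGraph (Fin n)) (π : Equiv.Perm (Fin n)) (p q : Fin n)
    (h : ∀ S, IsMaxSource G π S p → q ∉ S) : omegaO G π q < omegaO G π p := by
  have hne : {k : ℕ | p ∉ remaining G π k}.Nonempty := by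
    refine ⟨n, ?_⟩
    have h0 := remaining_card G π n
    have h1 : remaining G π n = ∅ := Finset.card_eq_zero.1 (by omega)
    simp [h1]
  have hmem : p ∉ remaining G π (omegaO G π p) := Nat.sInf_mem hne
  obtain ⟨k, hk⟩ : ∃ k, omegaO G π p = k + 1 := by
    apply Nat.exists_eq_succ_of_ne_zero
    intro h0
    rw [h0] at hmem
    simp [remaining] at hmem
  have hpk : p ∈ remaining G π k := by
    by_contra hc
    have : omegaO G π p ≤ k := Nat.sInf_le hc
    omega
  obtain ⟨v, hv, he⟩ := remaining_step G π k ⟨p, hpk⟩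
  rw [hk, he] at hmem
  have hpv : p = v := by
    by_contra hc
    exact hmem (Finset.mem_erase.2 ⟨hc, hpk⟩)
  subst hpv
  have : omegaO G π q ≤ k := Nat.sInf_le (h _ hv)
  omega

lemma omegaO_lt_of_nonadj {n : ℕ} (G : SimpleGraph (Fin n))
    (hDyck : ∀ i j i' j' : Fin n, G.Adj i j → i < j → i ≤ i' → i' < j' → j' ≤ j →
      G.Adj i' j')
    (π : Equiv.Perm (Fin n)) (p q : Fin n) (hpq : p < q) (hadj : ¬ G.Adj p q)
    (hcons : (π.symm p : ℕ) = π.symm q + 1 ∨ (π.symm q : ℕ) = π.symm p + 1) :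
    omegaO G π q < omegaO G π p := by
  apply omegaO_lt
  rintro S ⟨⟨hpS, hsrc⟩, hmax⟩ hqS
  obtain ⟨v, hv, hvmax⟩ := Finset.exists_max_image
    (S.filter fun v => p < v ∧ π.symm q ≤ π.symm v) (fun v => π.symm v)
    ⟨q, Finset.mem_filter.2 ⟨hqS, hpq, le_rfl⟩⟩
  obtain ⟨hvS, hpv, hqv⟩ := Finset.mem_filter.1 hv
  have hns : ¬ ∀ u ∈ S, ¬ (G.Adj u v ∧ π.symm v < π.symm u) :=
    fun hc => absurd (hmax v hvS hc) (not_le.2 hpv)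
  push Not at hns
  obtain ⟨u, huS, huv, hlt⟩ := hns
  have hup : u ≤ p := by
    by_contra hc
    exact absurd (hvmax u (Finset.mem_filter.2 ⟨huS, not_le.1 hc, hqv.trans hlt.le⟩))
      (not_le.2 hlt)
  rcases hup.eq_or_lt with rfl | hup
  · have : π.symm v = π.symm q := by
      apply Fin.ext
      simp only [Fin.lt_def, Fin.le_def] at *
      omega
    rw [π.symm.injective this] at huv
    exact hadj huv
  · have hup' : G.Adj u p := hDyck u v u p huv (hup.trans hpv) le_rfl hup hpv.le
    have hne : (π.symm u : ℕ) ≠ π.symm p := fun hc =>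
      hup.ne (π.symm.injective (Fin.ext hc))
    refine hsrc u huS ⟨hup', ?_⟩
    simp only [Fin.lt_def, Fin.le_def] at hlt hqv ⊢
    omega

/-- **Key Lemma.** For a Dyck graph `G` and `π ∈ S_n`, with `o` the acyclic
orientation induced by `π` and `ω_o` the greedy peeling labeling: for consecutive chain
positions `a, b` (i.e. `b = a + 1`), `π(a) ≻_{P_D} π(b)` (that is, `π(b) < π(a)` and
`{π(b), π(a)} ∉ E`) holds if and only if `ω_o(π(a)) < ω_o(π(b))`. -/
theorem key_lemma {n : ℕ} (G : SimpleGraph (Fin n))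
    (hDyck : ∀ i j i' j' : Fin n, G.Adj i j → i < j → i ≤ i' → i' < j' → j' ≤ j →
      G.Adj i' j')
    (π : Equiv.Perm (Fin n)) (a b : Fin n) (hab : (b : ℕ) = (a : ℕ) + 1) :
    (π b < π a ∧ ¬ G.Adj (π b) (π a)) ↔ omegaO G π (π a) < omegaO G π (π b) := by 
  have hne : π a ≠ π b := fun h => by
    have := congrArg Fin.val (π.injective h)
    omega
  constructor
  · rintro ⟨hlt, hadj⟩
    exact omegaO_lt_of_nonadj G hDyck π (π b) (π a) hlt hadj (by simp [hab])
  · intro h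
    by_cases hadj : G.Adj (π b) (π a)
    · have : omegaO G π (π b) < omegaO G π (π a) := by
        apply omegaO_lt
        rintro S ⟨⟨_, hsrc⟩, _⟩ hb
        refine hsrc _ hb ⟨hadj, ?_⟩
        simp only [Equiv.symm_apply_apply, Fin.lt_def]
        omega
      omega
    · refine ⟨?_, hadj⟩
      by_contra hc
      have hlt : π a < π b := lt_of_le_of_ne (not_lt.1 hc) hne
      have := omegaO_lt_of_nonadj G hDyck π (π a) (π b) hlt (fun h => hadj h.symm)
        (by simp [hab])
      omega
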